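/- Fix N ≥ 1 and H = (H_1,…,H_N) ∈ (0,1]^N. For every t ∈ ℝ^N, every r > 0 and every ε with 0 < ε ≤ r, the ball B_ρ(t,r) can be covered by at most ∏_{j=1}^N ( (2rN/ε)^{1/H_j} + 1 ) closed ρ-balls of radius ε. -/

import Mathlib

/-!
The proof is a product grid argument. A point `s` of the ball of radius `r` satisfies
`|s j - t j| ≤ a j := r ^ (1 / H j)` for every `j`, while the ball of radius `ε` about `u` contains
every `s` with `|s j - u j| ≤ δ j := (ε / N) ^ (1 / H j)` for all `j`. The interval
`[t j - a j, t j + a j]` is covered by `⌊a j / δ j⌋ + 1` intervals of half-length `δ j`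
(`grid_cover`), and `a j / δ j = (r N / ε) ^ (1 / H j)`. The products of the one-dimensional
centres are the centres of the cover.
-/

noncomputable section

/-- The anisotropic metric `ρ(s,t) = ∑ j, |s j - t j| ^ (H j)` on `ℝ^N`. -/
def rhoMetric {N : ℕ} (H : Fin N → ℝ) (s t : Fin N → ℝ) : ℝ :=
  ∑ j, |s j - t j| ^ (H j)

/-- The closed ball `B_ρ(t, r)` in the anisotropic metric `ρ`. -/
def ballRho {N : ℕ} (H : Fin N → ℝ) (t : Fin N → ℝ) (r : ℝ) : Set (Fin N → ℝ) :=
  {s | rhoMetric H s t ≤ r}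

/-- An interval of half-length `a` is covered by `⌊a / δ⌋ + 1` consecutive intervals of
half-length `δ`, laid out from its left endpoint. -/
lemma grid_cover {a δ x c : ℝ} (hδ : 0 < δ) (hx : |x - c| ≤ a) :
    ∃ k : Fin (⌊a / δ⌋₊ + 1), |x - (c - a + (2 * (k : ℕ) + 1) * δ)| ≤ δ := by
  obtain ⟨h1, h2⟩ := abs_le.1 hx
  have hy0 : 0 ≤ (x - c + a) / (2 * δ) := div_nonneg (by linarith) (by linarith)
  have hyq : (x - c + a) / (2 * δ) ≤ a / δ := by
    rw [div_le_div_iff₀ (by linarith) hδ]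
    nlinarith
  refine ⟨⟨⌊(x - c + a) / (2 * δ)⌋₊, Nat.lt_succ_of_le (Nat.floor_le_floor hyq)⟩, ?_⟩
  have hf1 := Nat.floor_le hy0
  have hf2 := Nat.lt_floor_add_one ((x - c + a) / (2 * δ))
  rw [le_div_iff₀ (by linarith)] at hf1
  rw [div_lt_iff₀ (by linarith)] at hf2
  rw [abs_le]
  constructor <;> dsimp only <;> linarith

/-- Covering-number bound: for `0 < ε ≤ r`, the ball `B_ρ(t,r)` can be covered by at most
`∏ j ((2rN/ε)^{1/H_j} + 1)` closed `ρ`-balls of radius `ε`. -/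
theorem statement9 {N : ℕ} (hN : 1 ≤ N) (H : Fin N → ℝ)
    (hH : ∀ j, H j ∈ Set.Ioc (0 : ℝ) 1)
    (t : Fin N → ℝ) (r ε : ℝ) (hr : 0 < r) (hε : 0 < ε) (hεr : ε ≤ r) :
    ∃ (m : ℕ) (u : Fin m → (Fin N → ℝ)),
      (m : ℝ) ≤ ∏ j, ((2 * r * N / ε) ^ (1 / H j) + 1) ∧
      ballRho H t r ⊆ ⋃ i, ballRho H (u i) ε := by
  have hN0 : (0 : ℝ) < N := by exact_mod_cast hN
  set a : Fin N → ℝ := fun j => r ^ (1 / H j) with ha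
  set δ : Fin N → ℝ := fun j => (ε / N) ^ (1 / H j) with hδdef
  have hδ : ∀ j, 0 < δ j := fun j => Real.rpow_pos_of_pos (div_pos hε hN0) _
  let ι := (j : Fin N) → Fin (⌊a j / δ j⌋₊ + 1)
  let e : ι ≃ Fin (Fintype.card ι) := Fintype.equivFin ι
  refine ⟨Fintype.card ι, fun i j => t j - a j + (2 * ((e.symm i j : ℕ) : ℝ) + 1) * δ j, ?_, ?_⟩
  · have hcard : Fintype.card ι = ∏ j, (⌊a j / δ j⌋₊ + 1) := by simp [ι]
    rw [hcard]
    push_cast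
    refine Finset.prod_le_prod (fun j _ => by positivity) fun j _ => ?_
    have hq : a j / δ j ≤ (2 * r * N / ε) ^ (1 / H j) := by
      simp only [ha, hδdef]
      rw [← Real.div_rpow hr.le (div_pos hε hN0).le]
      refine Real.rpow_le_rpow (by positivity) ?_ (one_div_nonneg.2 (hH j).1.le)
      rw [div_div_eq_mul_div]
      gcongr
      linarith
    have := Nat.floor_le (div_nonneg (Real.rpow_nonneg hr.le (1 / H j)) (hδ j).le)
    linarith
  · intro s hs
    have hs' : ∑ j, |s j - t j| ^ H j ≤ r := hs
    have hsj : ∀ j, |s j - t j| ≤ a j := fun j => by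
      have h1 : |s j - t j| ^ H j ≤ r :=
        (Finset.single_le_sum (f := fun j => |s j - t j| ^ H j)
          (fun i _ => Real.rpow_nonneg (abs_nonneg _) _) (Finset.mem_univ j)).trans hs'
      simp only [ha, one_div]
      exact (Real.le_rpow_inv_iff_of_pos (abs_nonneg _) hr.le (hH j).1).2 h1
    choose k hk using fun j => grid_cover (hδ j) (hsj j)
    refine Set.mem_iUnion.2 ⟨e k, ?_⟩
    change ∑ j, |s j - (t j - a j + (2 * ((e.symm (e k) j : ℕ) : ℝ) + 1) * δ j)| ^ H j ≤ ε
    rw [Equiv.symm_apply_apply]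
    calc _ ≤ ∑ _j : Fin N, ε / N := Finset.sum_le_sum fun j _ => by
            refine (Real.le_rpow_inv_iff_of_pos (abs_nonneg _) (div_pos hε hN0).le (hH j).1).1 ?_
            simpa only [hδdef, one_div] using hk j
      _ = ε := by
            simp only [Finset.sum_const, Finset.card_univ, Fintype.card_fin, nsmul_eq_mul]
            field_simp
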